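/- Let d ≥ 1 and let s ≥ 1 be an integer. There exists a constant C > 0, depending only on s and d, such that for all smooth functions f, g : ℝ^d → ℝ and every multi-index α with |α| ≤ s, sup_{x ∈ ℝ^d} ‖D^α(fg) − f · D^α g‖_{L²(B_1(x))} ≤ C ( (‖f‖_{L^∞} + ‖∇f‖_{L^∞}) · ∑_{|β| ≤ s−1} sup_{x} ‖D^β g‖_{L²(B_1(x))} + ‖g‖_{L^∞} · ∑_{|β| ≤ s} sup_{x} ‖D^β f‖_{L²(B_1(x))} ) (an inequality of extended nonnegative reals). -/

import Mathlib

open MeasureTheory Metric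
open scoped ENNReal

noncomputable section

/-- The partial derivative in the `i`-th coordinate direction. -/
def pd {d : ℕ} {F : Type*} [NormedAddCommGroup F] [NormedSpace ℝ F]
    (i : Fin d) (f : EuclideanSpace ℝ (Fin d) → F) : EuclideanSpace ℝ (Fin d) → F :=
  fun x => fderiv ℝ f x (EuclideanSpace.single i 1)

/-- The partial derivative `D^α` associated with a multi-index `α`. -/
def Dm {d : ℕ} {F : Type*} [NormedAddCommGroup F] [NormedSpace ℝ F]
    (α : Fin d → ℕ) (f : EuclideanSpace ℝ (Fin d) → F) : EuclideanSpace ℝ (Fin d) → F :=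
  (List.finRange d).foldr (fun i g => (pd i)^[α i] g) f

/-- The finite set of multi-indices `α` on `ℝ^d` with `|α| ≤ s`. -/
def mSet (d s : ℕ) : Finset (Fin d → ℕ) :=
  (Finset.Iic (fun _ => s : Fin d → ℕ)).filter fun α => (∑ i, α i) ≤ s

/-- The uniformly local Sobolev norm
`‖f‖_{H^s_ul} = ∑_{|α| ≤ s} sup_x ‖D^α f‖_{L²(B₁(x))}`. -/
def ulSobolev (d s : ℕ) {F : Type*} [NormedAddCommGroup F] [NormedSpace ℝ F]
    (f : EuclideanSpace ℝ (Fin d) → F) : ℝ≥0∞ :=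
  ∑ α ∈ mSet d s, ⨆ x : EuclideanSpace ℝ (Fin d),
    eLpNorm (Dm α f) 2 (volume.restrict (ball x 1))

section WordDerivatives

variable {d : ℕ}

lemma ContDiff.pd {f : EuclideanSpace ℝ (Fin d) → ℝ} (hf : ContDiff ℝ (⊤ : ℕ∞) f) (i : Fin d) :
    ContDiff ℝ (⊤ : ℕ∞) (pd i f) :=
  (hf.fderiv_right (m := (⊤ : ℕ∞)) (by simp)).clm_apply contDiff_const

lemma pd_comm {f : EuclideanSpace ℝ (Fin d) → ℝ} (hf : ContDiff ℝ (⊤ : ℕ∞) f) (i j : Fin d) :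
    pd i (pd j f) = pd j (pd i f) := by
  have hdiff : Differentiable ℝ (fderiv ℝ f) :=
    (hf.fderiv_right (m := (⊤ : ℕ∞)) (by simp)).differentiable (by simp)
  have key : ∀ (i j : Fin d) x, pd i (pd j f) x =
      fderiv ℝ (fderiv ℝ f) x (EuclideanSpace.single i 1) (EuclideanSpace.single j 1) := by
    intro i j x
    change fderiv ℝ (fun y => fderiv ℝ f y (EuclideanSpace.single j 1)) x _ = _
    rw [fderiv_clm_apply (hdiff x) (differentiableAt_const _)]
    simp
  funext x
  rw [key, key]
  refine (hf.contDiffAt.isSymmSndFDerivAt ?_) _ _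
  simp only [minSmoothness_of_isRCLikeNormedField]
  exact WithTop.coe_le_coe.2 (le_top : (2 : ℕ∞) ≤ ⊤)

/-- The iterated partial derivative along a word of coordinate directions; the head of the list is
applied last. -/
def wordDeriv (l : List (Fin d)) (f : EuclideanSpace ℝ (Fin d) → ℝ) :
    EuclideanSpace ℝ (Fin d) → ℝ :=
  l.foldr pd f

@[simp] lemma wordDeriv_nil (f : EuclideanSpace ℝ (Fin d) → ℝ) : wordDeriv [] f = f := rfl

@[simp] lemma wordDeriv_cons (i : Fin d) (l : List (Fin d)) (f : EuclideanSpace ℝ (Fin d) → ℝ) :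
    wordDeriv (i :: l) f = pd i (wordDeriv l f) := rfl

lemma wordDeriv_append (l m : List (Fin d)) (f : EuclideanSpace ℝ (Fin d) → ℝ) :
    wordDeriv (l ++ m) f = wordDeriv l (wordDeriv m f) := by
  simp [wordDeriv]

lemma ContDiff.wordDeriv {f : EuclideanSpace ℝ (Fin d) → ℝ} (hf : ContDiff ℝ (⊤ : ℕ∞) f)
    (l : List (Fin d)) : ContDiff ℝ (⊤ : ℕ∞) (wordDeriv l f) := by
  induction l with
  | nil => exact hf
  | cons i l ih => exact ih.pd i

lemma ContDiff.differentiable_wordDeriv {f : EuclideanSpace ℝ (Fin d) → ℝ}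
    (hf : ContDiff ℝ (⊤ : ℕ∞) f) (l : List (Fin d)) : Differentiable ℝ (_root_.wordDeriv l f) :=
  (hf.wordDeriv l).differentiable (by simp)

lemma tsupport_wordDeriv_subset (l : List (Fin d)) (f : EuclideanSpace ℝ (Fin d) → ℝ) :
    tsupport (wordDeriv l f) ⊆ tsupport f := by
  induction l with
  | nil => exact subset_rfl
  | cons i l ih => exact (tsupport_fderiv_apply_subset ℝ _).trans ih

lemma HasCompactSupport.wordDeriv {f : EuclideanSpace ℝ (Fin d) → ℝ} (hf : HasCompactSupport f)
    (l : List (Fin d)) : HasCompactSupport (wordDeriv l f) :=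
  hf.of_isClosed_subset (isClosed_tsupport _) (tsupport_wordDeriv_subset l f)

lemma wordDeriv_eqOn {f g : EuclideanSpace ℝ (Fin d) → ℝ} {U : Set (EuclideanSpace ℝ (Fin d))}
    (hU : IsOpen U) (h : Set.EqOn f g U) (l : List (Fin d)) :
    Set.EqOn (wordDeriv l f) (wordDeriv l g) U := by
  induction l with
  | nil => exact h
  | cons i l ih =>
    intro x hx
    simp only [wordDeriv_cons, pd]
    rw [(ih.eventuallyEq_of_mem (hU.mem_nhds hx)).fderiv_eq]

lemma wordDeriv_comp_sub (f : EuclideanSpace ℝ (Fin d) → ℝ) (a : EuclideanSpace ℝ (Fin d))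
    (l : List (Fin d)) :
    wordDeriv l (fun y => f (y - a)) = fun y => wordDeriv l f (y - a) := by
  induction l with
  | nil => rfl
  | cons i l ih =>
    funext y
    rw [wordDeriv_cons, ih]
    simp only [pd, wordDeriv_cons]
    rw [fderiv_comp_sub]

lemma wordDeriv_perm {f : EuclideanSpace ℝ (Fin d) → ℝ} (hf : ContDiff ℝ (⊤ : ℕ∞) f)
    {l m : List (Fin d)} (h : l.Perm m) : wordDeriv l f = wordDeriv m f := by
  induction h with
  | nil => rfl
  | cons i _ ih => simp [ih]
  | swap i j l => exact pd_comm (hf.wordDeriv l) j i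
  | trans _ _ ih₁ ih₂ => exact ih₁.trans ih₂

/-- The sorted word in which each letter `i` occurs `α i` times. -/
def multiWord (α : Fin d → ℕ) : List (Fin d) :=
  (List.finRange d).flatMap fun i => List.replicate (α i) i

lemma Dm_eq_wordDeriv (α : Fin d → ℕ) (f : EuclideanSpace ℝ (Fin d) → ℝ) :
    Dm α f = wordDeriv (multiWord α) f := by
  have hrep : ∀ (i : Fin d) (n : ℕ) (g : EuclideanSpace ℝ (Fin d) → ℝ),
      wordDeriv (List.replicate n i) g = (pd i)^[n] g := by
    intro i n g
    induction n with
    | zero => rfl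
    | succ n ih => rw [List.replicate_succ, wordDeriv_cons, ih, Function.iterate_succ_apply']
  unfold Dm multiWord
  induction List.finRange d with
  | nil => rfl
  | cons i L ih => rw [List.foldr_cons, ih, List.flatMap_cons, wordDeriv_append, hrep]

lemma length_multiWord (α : Fin d → ℕ) : (multiWord α).length = ∑ i, α i := by
  simp [multiWord, List.length_flatMap, ← List.ofFn_eq_map, List.sum_ofFn]

lemma count_multiWord (α : Fin d → ℕ) (i : Fin d) : (multiWord α).count i = α i := by
  simp [multiWord, List.count_flatMap, ← List.ofFn_eq_map, List.sum_ofFn, Function.comp_def,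
    List.count_replicate]

lemma exists_Dm_eq_wordDeriv {f : EuclideanSpace ℝ (Fin d) → ℝ} (hf : ContDiff ℝ (⊤ : ℕ∞) f)
    (l : List (Fin d)) : ∃ α : Fin d → ℕ, ∑ i, α i = l.length ∧ Dm α f = wordDeriv l f := by
  have hperm : (multiWord fun i => l.count i).Perm l :=
    List.perm_iff_count.2 fun i => count_multiWord _ i
  exact ⟨fun i => l.count i, (length_multiWord _).symm.trans hperm.length_eq,
    (Dm_eq_wordDeriv _ _).trans (wordDeriv_perm hf hperm)⟩

lemma eLpNorm_wordDeriv_le_ulSobolev {f : EuclideanSpace ℝ (Fin d) → ℝ}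
    (hf : ContDiff ℝ (⊤ : ℕ∞) f) {l : List (Fin d)} {m : ℕ} (hl : l.length ≤ m)
    (x : EuclideanSpace ℝ (Fin d)) :
    eLpNorm (wordDeriv l f) 2 (volume.restrict (ball x 1)) ≤ ulSobolev d m f := by
  obtain ⟨α, hα, hD⟩ := exists_Dm_eq_wordDeriv hf l
  have hmem : α ∈ mSet d m := by
    simp only [mSet, Finset.mem_filter, Finset.mem_Iic]
    refine ⟨fun i => ?_, by omega⟩
    have := Finset.single_le_sum (f := α) (fun _ _ => Nat.zero_le _) (Finset.mem_univ i)
    simp only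
    omega
  rw [← hD]
  exact (le_iSup (fun x => eLpNorm (Dm α f) 2 (volume.restrict (ball x 1))) x).trans
    (Finset.single_le_sum (f := fun α => ⨆ x : EuclideanSpace ℝ (Fin d),
      eLpNorm (Dm α f) 2 (volume.restrict (ball x 1))) (fun _ _ => zero_le) hmem)

/-- The ways to distribute the letters of a word over two factors, the first one receiving at least
one letter. -/
def leibnizSplits : List (Fin d) → List (List (Fin d) × List (Fin d))
  | [] => []
  | i :: l => (leibnizSplits l).map (fun p => (i :: p.1, p.2)) ++
      ((leibnizSplits l).map (fun p => (p.1, i :: p.2)) ++ [([i], l)])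

lemma length_leibnizSplits_add_one (l : List (Fin d)) :
    (leibnizSplits l).length + 1 = 2 ^ l.length := by
  induction l with
  | nil => rfl
  | cons i l ih =>
    simp only [leibnizSplits, List.length_append, List.length_map, List.length_cons,
      List.length_nil, pow_succ]
    omega

lemma length_of_mem_leibnizSplits {l : List (Fin d)} {p : List (Fin d) × List (Fin d)}
    (hp : p ∈ leibnizSplits l) : p.1 ≠ [] ∧ p.1.length + p.2.length = l.length := by
  induction l generalizing p with
  | nil => simp [leibnizSplits] at hp
  | cons i l ih =>
    simp only [leibnizSplits, List.mem_append, List.mem_map, List.mem_singleton] at hp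
    rcases hp with ⟨q, hq, rfl⟩ | ⟨q, hq, rfl⟩ | rfl
    · have := (ih hq).2
      simp only [List.length_cons, ne_eq, reduceCtorEq, not_false_eq_true, true_and]
      omega
    · have := ih hq
      simp only [List.length_cons]
      exact ⟨this.1, by omega⟩
    · simp [add_comm]

lemma pd_add {f g : EuclideanSpace ℝ (Fin d) → ℝ} (hf : Differentiable ℝ f)
    (hg : Differentiable ℝ g) (i : Fin d) (x : EuclideanSpace ℝ (Fin d)) :
    pd i (fun y => f y + g y) x = pd i f x + pd i g x := by
  simp only [pd]
  rw [fderiv_fun_add (hf x) (hg x)]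
  rfl

lemma pd_mul {f g : EuclideanSpace ℝ (Fin d) → ℝ} (hf : Differentiable ℝ f)
    (hg : Differentiable ℝ g) (i : Fin d) (x : EuclideanSpace ℝ (Fin d)) :
    pd i (fun y => f y * g y) x = pd i f x * g x + f x * pd i g x := by
  simp only [pd]
  rw [fderiv_fun_mul (hf x) (hg x)]
  simp
  ring

lemma pd_listSum {ι : Type*} {h : ι → EuclideanSpace ℝ (Fin d) → ℝ}
    (hh : ∀ p, Differentiable ℝ (h p)) (i : Fin d) (L : List ι) :
    Differentiable ℝ (fun y => (L.map fun p => h p y).sum) ∧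
    ∀ x, pd i (fun y => (L.map fun p => h p y).sum) x = (L.map fun p => pd i (h p) x).sum := by
  induction L with
  | nil => simp [pd]
  | cons p L ih =>
    simp only [List.map_cons, List.sum_cons]
    exact ⟨(hh p).add ih.1, fun x => by rw [pd_add (hh p) ih.1, ih.2]⟩

/-- The Leibniz rule, with the term in which no derivative falls on the first factor singled
out. -/
lemma wordDeriv_mul {f g : EuclideanSpace ℝ (Fin d) → ℝ} (hf : ContDiff ℝ (⊤ : ℕ∞) f)
    (hg : ContDiff ℝ (⊤ : ℕ∞) g) (l : List (Fin d)) :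
    wordDeriv l (fun y => f y * g y) = fun y => f y * wordDeriv l g y +
      ((leibnizSplits l).map fun p => wordDeriv p.1 f y * wordDeriv p.2 g y).sum := by
  induction l with
  | nil => simp [leibnizSplits]
  | cons i l ih =>
    have hsum := pd_listSum (h := fun p : List (Fin d) × List (Fin d) => fun y =>
        wordDeriv p.1 f y * wordDeriv p.2 g y)
      (fun p => (hf.differentiable_wordDeriv _).mul (hg.differentiable_wordDeriv _)) i
      (leibnizSplits l)
    have hf' : Differentiable ℝ f := hf.differentiable (by simp)
    funext x
    rw [wordDeriv_cons, ih, pd_add (hf'.fun_mul (hg.differentiable_wordDeriv l)) hsum.1, hsum.2,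
      pd_mul hf' (hg.differentiable_wordDeriv l)]
    simp_rw [fun p : List (Fin d) × List (Fin d) =>
      pd_mul (hf.differentiable_wordDeriv p.1) (hg.differentiable_wordDeriv p.2) i x]
    simp only [leibnizSplits, List.map_append, List.sum_append, List.map_map, Function.comp_def,
      List.map_cons, List.map_nil, List.sum_cons, List.sum_nil, wordDeriv_cons, wordDeriv_nil,
      List.sum_map_add]
    ring

end WordDerivatives

section GagliardoNirenberg

lemma hasDerivAt_abs_rpow_mul_self {a : ℝ} (ha : 0 < a) (t : ℝ) :
    HasDerivAt (fun t : ℝ => |t| ^ a * t) ((a + 1) * |t| ^ a) t := by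
  rcases eq_or_ne t 0 with rfl | ht
  · rw [hasDerivAt_iff_tendsto_slope]
    have hcont : Continuous fun t : ℝ => |t| ^ a :=
      continuous_abs.rpow_const fun _ => Or.inr ha.le
    have hlim := (hcont.tendsto 0).mono_left (nhdsWithin_le_nhds (s := {(0 : ℝ)}ᶜ))
    simp only [abs_zero, Real.zero_rpow ha.ne', mul_zero] at hlim ⊢
    refine hlim.congr' ?_
    filter_upwards [self_mem_nhdsWithin] with y hy
    have hy : y ≠ 0 := hy
    simp [slope_def_field, hy]
  · have h := ((hasDerivAt_abs ht).rpow_const (p := a) (Or.inl (abs_ne_zero.2 ht))).mul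
      (hasDerivAt_id t)
    refine h.congr_deriv ?_
    have hrpow : |t| ^ a = |t| ^ (a - 1) * |t| := by
      rw [← Real.rpow_add_one (abs_ne_zero.2 ht)]; ring_nf
    have hsign : (SignType.sign t : ℝ) * t = |t| := sign_mul_self t
    simp only [id, mul_one]
    linear_combination (a * |t| ^ (a - 1)) * hsign - a * hrpow

variable {d : ℕ}

lemma lintegral_pd_rpow_le {w : EuclideanSpace ℝ (Fin d) → ℝ} (hw : ContDiff ℝ (⊤ : ℕ∞) w)
    (hc : HasCompactSupport w) (i : Fin d) {a : ℝ} (ha : 0 < a) :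
    ∫⁻ x, ‖pd i w x‖ₑ ^ (a + 2) ≤
      ENNReal.ofReal (a + 1) * ∫⁻ x, ‖(w x * pd i (pd i w) x) * ‖pd i w x‖ ^ a‖ₑ := by
  have hu := hw.pd i
  have huc : HasCompactSupport (pd i w) := hc.wordDeriv [i]
  set u := pd i w
  have hudiff : Differentiable ℝ u := hu.differentiable (by simp)
  have hwdiff : Differentiable ℝ w := hw.differentiable (by simp)
  have hpow : Continuous fun x => |u x| ^ a :=
    hu.continuous.abs.rpow_const fun _ => Or.inr ha.le
  set φ : EuclideanSpace ℝ (Fin d) → ℝ := fun x => |u x| ^ a * u x with hφ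
  have hφcont : Continuous φ := hpow.mul hu.continuous
  have hφderiv : ∀ x, HasFDerivAt φ (((a + 1) * |u x| ^ a) • fderiv ℝ u x) x := fun x =>
    (hasDerivAt_abs_rpow_mul_self ha (u x)).comp_hasFDerivAt x (hudiff x).hasFDerivAt
  have hφpd : ∀ x, fderiv ℝ φ x (EuclideanSpace.single i 1) = (a + 1) * |u x| ^ a * pd i u x := by
    intro x
    rw [(hφderiv x).fderiv]
    simp [pd]
  have hpu : Continuous (pd i u) := (hu.pd i).continuous
  have hw_integrable : Integrable fun x => w x * (pd i u x * |u x| ^ a) :=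
    (hw.continuous.mul (hpu.mul hpow)).integrable_of_hasCompactSupport hc.mul_right
  have hφu_integrable : Integrable fun x => φ x * u x :=
    (hφcont.mul hu.continuous).integrable_of_hasCompactSupport huc.mul_left
  have hparts := integral_mul_fderiv_eq_neg_fderiv_mul_of_integrable (μ := volume) (f := φ) (g := w)
    (v := EuclideanSpace.single i 1)
    (by
      simp_rw [hφpd]
      refine (hw_integrable.const_mul (a + 1)).congr (.of_forall fun x => ?_)
      simp only
      ring)
    hφu_integrable
    ((hφcont.mul hw.continuous).integrable_of_hasCompactSupport hc.mul_left)
    (fun x _ => (hφderiv x).differentiableAt) (fun x _ => hwdiff x)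
  have hnonneg : ∀ x, φ x * u x = ‖u x‖ ^ (a + 2) := by
    intro x
    rcases eq_or_ne (u x) 0 with h0 | h0
    · simp only [hφ, h0]
      rw [norm_zero, Real.zero_rpow (by linarith)]
      simp
    · rw [hφ, Real.norm_eq_abs, Real.rpow_add (abs_pos.2 h0)]
      simp only [Real.rpow_ofNat, sq_abs]
      ring
  have hleft : ENNReal.ofReal (∫ x, φ x * u x) = ∫⁻ x, ‖u x‖ₑ ^ (a + 2) := by
    rw [ofReal_integral_eq_lintegral_ofReal hφu_integrable
      (.of_forall fun x => by simp only [Pi.zero_apply]; rw [hnonneg]; positivity)]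
    refine lintegral_congr fun x => ?_
    rw [hnonneg, ← ENNReal.ofReal_rpow_of_nonneg (norm_nonneg _) (by linarith), ofReal_norm]
  rw [← hleft]
  calc ENNReal.ofReal (∫ x, φ x * u x)
      = ENNReal.ofReal (-∫ x, fderiv ℝ φ x (EuclideanSpace.single i 1) * w x) := by
        rw [← hparts]
        rfl
    _ ≤ ‖∫ x, fderiv ℝ φ x (EuclideanSpace.single i 1) * w x‖ₑ :=
      (Real.ofReal_le_enorm _).trans_eq (enorm_neg _)
    _ ≤ ∫⁻ x, ‖fderiv ℝ φ x (EuclideanSpace.single i 1) * w x‖ₑ :=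
      enorm_integral_le_lintegral_enorm _
    _ = ∫⁻ x, ENNReal.ofReal (a + 1) * ‖(w x * pd i u x) * ‖u x‖ ^ a‖ₑ := by
      refine lintegral_congr fun x => ?_
      rw [← Real.enorm_of_nonneg (by linarith : 0 ≤ a + 1), ← enorm_mul, hφpd, Real.norm_eq_abs]
      congr 1
      ring
    _ = _ := lintegral_const_mul' _ _ ENNReal.ofReal_ne_top

/-- One step of the Gagliardo–Nirenberg inequality, with `p = a + 2` and `2 / p = 1 / q + 1 / r`. -/
lemma eLpNorm_pd_sq_le {w : EuclideanSpace ℝ (Fin d) → ℝ} (hw : ContDiff ℝ (⊤ : ℕ∞) w)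
    (hc : HasCompactSupport w) (i : Fin d) {a : ℝ} (ha : 0 < a) {q r : ℝ≥0∞}
    [q.HolderTriple r (ENNReal.ofReal ((a + 2) / 2))] :
    eLpNorm (pd i w) (ENNReal.ofReal (a + 2)) volume ^ 2 ≤
      ENNReal.ofReal (a + 1) * (eLpNorm w q volume * eLpNorm (pd i (pd i w)) r volume) := by
  have hu := (hw.pd i).continuous
  have huu := ((hw.pd i).pd i).continuous
  have huc : HasCompactSupport (pd i w) := hc.wordDeriv [i]
  have hNtop : eLpNorm (pd i w) (ENNReal.ofReal (a + 2)) volume ≠ ⊤ :=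
    (hu.memLp_of_hasCompactSupport huc).eLpNorm_ne_top
  have hle := lintegral_pd_rpow_le hw hc i ha
  have hpow : eLpNorm (pd i w) (ENNReal.ofReal (a + 2)) volume ^ (a + 2) =
      ∫⁻ x, ‖pd i w x‖ₑ ^ (a + 2) := by
    have h := eLpNorm_nnreal_pow_eq_lintegral (μ := volume) (f := pd i w)
      (p := (a + 2).toNNReal) (by simp; linarith)
    rwa [Real.coe_toNNReal _ (by linarith)] at h
  have hholder : (ENNReal.ofReal ((a + 2) / 2)).HolderTriple (ENNReal.ofReal ((a + 2) / a)) 1 := by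
    refine ⟨?_⟩
    rw [← ENNReal.ofReal_inv_of_pos (by positivity), ← ENNReal.ofReal_inv_of_pos (by positivity),
      ← ENNReal.ofReal_add (by positivity) (by positivity), inv_one, ← ENNReal.ofReal_one]
    congr 1
    field_simp
    ring
  have hfactor : eLpNorm (fun x => ‖pd i w x‖ ^ a) (ENNReal.ofReal ((a + 2) / a)) volume =
      eLpNorm (pd i w) (ENNReal.ofReal (a + 2)) volume ^ a := by
    rw [eLpNorm_norm_rpow _ ha, ← ENNReal.ofReal_mul (by positivity), div_mul_cancel₀ _ ha.ne']
  have hpowcont : Continuous fun x => ‖pd i w x‖ ^ a := hu.norm.rpow_const fun _ => Or.inr ha.le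
  have h₁ : ∫⁻ x, ‖(w x * pd i (pd i w) x) * ‖pd i w x‖ ^ a‖ₑ ≤
      (eLpNorm w q volume * eLpNorm (pd i (pd i w)) r volume) *
        eLpNorm (pd i w) (ENNReal.ofReal (a + 2)) volume ^ a := by
    rw [← eLpNorm_one_eq_lintegral_enorm, ← hfactor]
    refine (eLpNorm_smul_le_mul_eLpNorm (φ := fun x => w x * pd i (pd i w) x)
      hpowcont.aestronglyMeasurable
      (hw.continuous.mul huu).aestronglyMeasurable (hpqr := hholder)).trans ?_
    gcongr
    exact eLpNorm_smul_le_mul_eLpNorm (φ := w) huu.aestronglyMeasurable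
      hw.continuous.aestronglyMeasurable
  set N := eLpNorm (pd i w) (ENNReal.ofReal (a + 2)) volume
  rcases eq_or_ne N 0 with hN | hN
  · simp [hN]
  have hsplit : N ^ (a + 2) = N ^ 2 * N ^ a := by
    rw [add_comm, ENNReal.rpow_add _ _ hN hNtop, ENNReal.rpow_ofNat]
  rw [← ENNReal.mul_le_mul_iff_left (c := N ^ a) (by simp [hN, ha.not_gt])
    (ENNReal.rpow_ne_top_of_nonneg ha.le hNtop), ← hsplit, hpow, mul_assoc]
  exact hle.trans (by gcongr)

/-- The Gagliardo–Nirenberg exponent `2 k / j` for derivatives of order `j`. -/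
def gnExponent (k j : ℕ) : ℝ≥0∞ := ((j : ℝ≥0∞) / (2 * k))⁻¹

lemma holderTriple_gnExponent {k i j : ℕ} (h : i + j = k) (hk : k ≠ 0) :
    (gnExponent k i).HolderTriple (gnExponent k j) 2 := by
  refine ⟨?_⟩
  rw [gnExponent, gnExponent, inv_inv, inv_inv, ENNReal.div_add_div_same, ← Nat.cast_add, h]
  have : (k : ℝ≥0∞) ≠ 0 := by exact_mod_cast hk
  rw [ENNReal.div_eq_inv_mul, ENNReal.mul_inv (by simp) (by simp), mul_assoc,
    ENNReal.inv_mul_cancel this (by simp), mul_one]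

lemma gnExponent_eq_ofReal {k j : ℕ} (hj : j ≠ 0) (hk : k ≠ 0) :
    gnExponent k j = ENNReal.ofReal (2 * k / j) := by
  have hj' : (0 : ℝ) < j := by positivity
  have hk' : (0 : ℝ) < k := by positivity
  rw [gnExponent, ENNReal.inv_div (by simp) (by simp [hj]), ENNReal.ofReal_div_of_pos hj',
    ENNReal.ofReal_mul (by simp)]
  simp

lemma eLpNorm_pd_gnExponent_sq_le {w : EuclideanSpace ℝ (Fin d) → ℝ}
    (hw : ContDiff ℝ (⊤ : ℕ∞) w) (hc : HasCompactSupport w) (i : Fin d) {k j : ℕ}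
    (hjk : j + 1 < k) :
    eLpNorm (pd i w) (gnExponent k (j + 1)) volume ^ 2 ≤
      ENNReal.ofReal (2 * k) * (eLpNorm w (gnExponent k j) volume *
        eLpNorm (pd i (pd i w)) (gnExponent k (j + 2)) volume) := by
  have hj : (0 : ℝ) < j + 1 := by positivity
  have hjk' : (j : ℝ) + 1 < k := by exact_mod_cast hjk
  set a : ℝ := 2 * k / (j + 1) - 2 with ha_def
  have ha : 0 < a := by
    rw [ha_def, sub_pos, lt_div_iff₀ hj]; linarith
  have hexp : gnExponent k (j + 1) = ENNReal.ofReal (a + 2) := by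
    rw [gnExponent_eq_ofReal (by omega) (by omega)]
    simp [ha_def]
  have hholder : (gnExponent k j).HolderTriple (gnExponent k (j + 2))
      (ENNReal.ofReal ((a + 2) / 2)) := by
    refine ⟨?_⟩
    have hk0 : (0 : ℝ) < 2 * k := by linarith
    have hdiv : ∀ n : ℕ, (n : ℝ≥0∞) / (2 * k) = ENNReal.ofReal (n / (2 * k)) := by
      intro n
      rw [ENNReal.ofReal_div_of_pos hk0, ENNReal.ofReal_mul (by simp)]
      simp
    rw [gnExponent, gnExponent, inv_inv, inv_inv, hdiv, hdiv,
      ← ENNReal.ofReal_add (by positivity) (by positivity),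
      ← ENNReal.ofReal_inv_of_pos (by positivity)]
    congr 1
    rw [show a + 2 = 2 * k / (j + 1) by rw [ha_def]; ring]
    have : (k : ℝ) ≠ 0 := by linarith
    push_cast
    field_simp
    ring
  rw [hexp]
  refine (eLpNorm_pd_sq_le hw hc i ha (q := gnExponent k j) (r := gnExponent k (j + 2))).trans ?_
  gcongr
  have : 2 * (k : ℝ) / (j + 1) ≤ 2 * k :=
    div_le_self (by positivity) (by linarith [j.cast_nonneg (α := ℝ)])
  linarith

/-- A maximum principle for almost log-convex finite sequences. -/
lemma le_of_sq_le_mul {c : ℕ → ℝ} {K : ℝ} (hK : 1 < K) {k : ℕ} (hc : ∀ j, 0 ≤ c j)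
    (h : ∀ j, j + 1 < k → c (j + 1) ^ 2 ≤ K * (c j * c (j + 2))) {j : ℕ} (hj : j ≤ k) :
    c j ≤ K ^ k ^ 2 * (c 0 + c k) := by
  have hK0 : 0 < K := by linarith
  set e : ℕ → ℝ := fun j => K ^ j ^ 2 * c j with he
  have he0 : ∀ j, 0 ≤ e j := fun j => mul_nonneg (by positivity) (hc j)
  have hstep : ∀ j, j + 1 < k → K * e (j + 1) ^ 2 ≤ e j * e (j + 2) := by
    intro j hj
    calc K * e (j + 1) ^ 2 = K ^ (2 * (j + 1) ^ 2 + 1) * c (j + 1) ^ 2 := by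
          simp only [he]; ring
      _ ≤ K ^ (2 * (j + 1) ^ 2 + 1) * (K * (c j * c (j + 2))) := by gcongr; exact h j hj
      _ = e j * e (j + 2) := by simp only [he]; ring
  obtain ⟨m, hm, hmax⟩ := Finset.exists_max_image (Finset.range (k + 1)) e ⟨0, by simp⟩
  have hmax' : ∀ i, i ≤ k → e i ≤ e m := fun i hi => hmax i (by simp; omega)
  have hmk : m ≤ k := by simp at hm; omega
  have hbound : e m ≤ e 0 + e k := by
    rcases Nat.eq_zero_or_pos m with rfl | hpos
    · linarith [he0 k]
    rcases hmk.eq_or_lt with rfl | hlt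
    · linarith [he0 0]
    obtain ⟨n, rfl⟩ : ∃ n, m = n + 1 := ⟨m - 1, by omega⟩
    have h₁ := hstep n hlt
    have h₂ : e n * e (n + 2) ≤ e (n + 1) * e (n + 1) :=
      mul_le_mul (hmax' n (by omega)) (hmax' (n + 2) (by omega)) (he0 _) (he0 _)
    have h₃ : e (n + 1) = 0 := by
      by_contra hne
      have : 0 < e (n + 1) ^ 2 := by have := he0 (n + 1); positivity
      nlinarith
    linarith [he0 0, he0 k]
  calc c j ≤ e j := le_mul_of_one_le_left (hc j) (one_le_pow₀ hK.le)
    _ ≤ e 0 + e k := (hmax' j hj).trans hbound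
    _ ≤ K ^ k ^ 2 * (c 0 + c k) := by
      have : (1 : ℝ) ≤ K ^ k ^ 2 := one_le_pow₀ hK.le
      simp only [he, ne_eq, OfNat.ofNat_ne_zero, not_false_eq_true, zero_pow, pow_zero, one_mul]
      nlinarith [hc 0]

/-- The largest `L^{2k/j}` norm of a derivative of order `j`. -/
def gnNorm (k j : ℕ) (v : EuclideanSpace ℝ (Fin d) → ℝ) : ℝ≥0∞ :=
  ⨆ l : List.Vector (Fin d) j, eLpNorm (wordDeriv l.1 v) (gnExponent k j) volume

lemma eLpNorm_wordDeriv_le_gnNorm (k : ℕ) (l : List (Fin d))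
    (v : EuclideanSpace ℝ (Fin d) → ℝ) :
    eLpNorm (wordDeriv l v) (gnExponent k l.length) volume ≤ gnNorm k l.length v :=
  le_iSup (fun m : List.Vector (Fin d) l.length =>
    eLpNorm (wordDeriv m.1 v) (gnExponent k l.length) volume) ⟨l, rfl⟩

lemma exists_gnNorm_eq [NeZero d] (k j : ℕ) (v : EuclideanSpace ℝ (Fin d) → ℝ) :
    ∃ l : List (Fin d), l.length = j ∧
      gnNorm k j v = eLpNorm (wordDeriv l v) (gnExponent k j) volume := by
  have : Nonempty (List.Vector (Fin d) j) := ⟨List.Vector.replicate j 0⟩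
  obtain ⟨l, hl⟩ := exists_eq_ciSup_of_finite (f := fun l : List.Vector (Fin d) j =>
    eLpNorm (wordDeriv l.1 v) (gnExponent k j) volume)
  exact ⟨l.1, l.2, hl.symm⟩

variable [NeZero d] {v w : EuclideanSpace ℝ (Fin d) → ℝ}

lemma gnNorm_ne_top (hv : ContDiff ℝ (⊤ : ℕ∞) v) (hvc : HasCompactSupport v) (k j : ℕ) :
    gnNorm k j v ≠ ⊤ := by
  obtain ⟨l, -, hl⟩ := exists_gnNorm_eq k j v
  rw [hl]
  exact ((hv.wordDeriv l).continuous.memLp_of_hasCompactSupport (hvc.wordDeriv l)).eLpNorm_ne_top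

lemma gnNorm_sq_le (hv : ContDiff ℝ (⊤ : ℕ∞) v) (hvc : HasCompactSupport v) {k j : ℕ}
    (hjk : j + 1 < k) :
    gnNorm k (j + 1) v ^ 2 ≤ ENNReal.ofReal (2 * k) * (gnNorm k j v * gnNorm k (j + 2) v) := by
  obtain ⟨l, hl, hN⟩ := exists_gnNorm_eq k (j + 1) v
  obtain ⟨i, l, rfl⟩ : ∃ i m, l = i :: m := List.exists_cons_of_length_eq_add_one hl
  have hl' : l.length = j := by simpa using hl
  rw [hN, wordDeriv_cons]
  refine (eLpNorm_pd_gnExponent_sq_le (hv.wordDeriv l) (hvc.wordDeriv l) i hjk).trans ?_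
  gcongr
  · simpa [hl'] using eLpNorm_wordDeriv_le_gnNorm k l v
  · simpa [hl'] using eLpNorm_wordDeriv_le_gnNorm k (i :: i :: l) v

lemma gnNorm_mul_gnNorm_le (hv : ContDiff ℝ (⊤ : ℕ∞) v) (hvc : HasCompactSupport v)
    (hw : ContDiff ℝ (⊤ : ℕ∞) w) (hwc : HasCompactSupport w) {k j : ℕ} (hk : k ≠ 0) (hj : j ≤ k) :
    gnNorm k j v * gnNorm k (k - j) w ≤ ENNReal.ofReal (((2 * k) ^ 2) ^ k ^ 2) *
      (gnNorm k 0 v * gnNorm k k w + gnNorm k k v * gnNorm k 0 w) := by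
  have hvt := gnNorm_ne_top hv hvc k
  have hwt := gnNorm_ne_top hw hwc k
  have hreal : ∀ {u : EuclideanSpace ℝ (Fin d) → ℝ}, ContDiff ℝ (⊤ : ℕ∞) u → HasCompactSupport u →
      ∀ j, j + 1 < k → (gnNorm k (j + 1) u).toReal ^ 2 ≤
        2 * k * ((gnNorm k j u).toReal * (gnNorm k (j + 2) u).toReal) := by
    intro u hu huc j hjk
    have h := ENNReal.toReal_mono (ENNReal.mul_ne_top ENNReal.ofReal_ne_top
      (ENNReal.mul_ne_top (gnNorm_ne_top hu huc k j) (gnNorm_ne_top hu huc k (j + 2))))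
      (gnNorm_sq_le hu huc hjk)
    rwa [ENNReal.toReal_pow, ENNReal.toReal_mul, ENNReal.toReal_mul,
      ENNReal.toReal_ofReal (by positivity)] at h
  have hk1 : (1 : ℝ) ≤ k := by exact_mod_cast Nat.one_le_iff_ne_zero.2 hk
  have hmain := le_of_sq_le_mul (K := (2 * k : ℝ) ^ 2) (k := k)
    (c := fun j => (gnNorm k j v * gnNorm k (k - j) w).toReal)
    (by nlinarith) (fun _ => ENNReal.toReal_nonneg) (fun j hjk => ?_) hj
  · rw [← ENNReal.ofReal_toReal (ENNReal.mul_ne_top (hvt j) (hwt (k - j)))]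
    refine (ENNReal.ofReal_le_ofReal hmain).trans_eq ?_
    rw [ENNReal.ofReal_mul (by positivity),
      ENNReal.ofReal_add ENNReal.toReal_nonneg ENNReal.toReal_nonneg,
      ENNReal.ofReal_toReal (ENNReal.mul_ne_top (hvt _) (hwt _)),
      ENNReal.ofReal_toReal (ENNReal.mul_ne_top (hvt _) (hwt _))]
    simp
  · obtain ⟨m, rfl⟩ : ∃ m, k = j + 2 + m := ⟨k - (j + 2), by omega⟩
    have h₁ := hreal hv hvc j hjk
    have h₂ := hreal hw hwc m (by omega)
    simp only [ENNReal.toReal_mul, mul_pow]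
    rw [show j + 2 + m - (j + 1) = m + 1 by omega, show j + 2 + m - j = m + 2 by omega,
      show j + 2 + m - (j + 2) = m by omega]
    refine (mul_le_mul h₁ h₂ (by positivity) (by positivity)).trans_eq ?_
    ring

/-- The Moser product estimate for compactly supported functions. -/
lemma eLpNorm_wordDeriv_mul_wordDeriv_le (hv : ContDiff ℝ (⊤ : ℕ∞) v) (hvc : HasCompactSupport v)
    (hw : ContDiff ℝ (⊤ : ℕ∞) w) (hwc : HasCompactSupport w) {k : ℕ} {p q : List (Fin d)}
    (hpq : p.length + q.length = k) {V W : ℝ≥0∞}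
    (hV : ∀ l : List (Fin d), l.length = k → eLpNorm (wordDeriv l v) 2 volume ≤ V)
    (hW : ∀ l : List (Fin d), l.length = k → eLpNorm (wordDeriv l w) 2 volume ≤ W) :
    eLpNorm (fun y => wordDeriv p v y * wordDeriv q w y) 2 volume ≤
      ENNReal.ofReal (((2 * k) ^ 2) ^ k ^ 2) *
        (eLpNorm v ⊤ volume * W + V * eLpNorm w ⊤ volume) := by
  have hp := (hv.wordDeriv p).continuous.aestronglyMeasurable (μ := volume)
  have hq := (hw.wordDeriv q).continuous.aestronglyMeasurable (μ := volume)
  rcases eq_or_ne k 0 with rfl | hk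
  · obtain ⟨rfl, rfl⟩ : p = [] ∧ q = [] := by
      constructor <;> apply List.length_eq_zero_iff.1 <;> omega
    refine (eLpNorm_smul_le_mul_eLpNorm (p := ⊤) (q := 2) (φ := wordDeriv [] v) hq hp).trans ?_
    simp only [wordDeriv_nil, ne_eq, OfNat.ofNat_ne_zero, not_false_eq_true, zero_pow, pow_zero,
      ENNReal.ofReal_one, one_mul]
    exact le_add_right (by gcongr; exact hW [] rfl)
  have h2 : gnExponent k k = 2 := by
    rw [gnExponent_eq_ofReal hk hk, mul_div_cancel_right₀ _ (by exact_mod_cast hk)]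
    simp
  have htop : gnExponent k 0 = ⊤ := by simp [gnExponent]
  have hzero : ∀ u : EuclideanSpace ℝ (Fin d) → ℝ, gnNorm k 0 u = eLpNorm u ⊤ volume := by
    intro u
    obtain ⟨l, hl, hN⟩ := exists_gnNorm_eq k 0 u
    rw [hN, List.length_eq_zero_iff.1 hl, htop, wordDeriv_nil]
  have hholder := holderTriple_gnExponent hpq hk
  refine (eLpNorm_smul_le_mul_eLpNorm (φ := wordDeriv p v) hq hp (hpqr := hholder)).trans ?_
  refine (mul_le_mul' (eLpNorm_wordDeriv_le_gnNorm k p v)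
    (eLpNorm_wordDeriv_le_gnNorm k q w)).trans ?_
  rw [show q.length = k - p.length by omega]
  refine (gnNorm_mul_gnNorm_le hv hvc hw hwc hk (by omega)).trans ?_
  rw [hzero, hzero]
  gcongr
  · exact iSup_le fun l => by rw [h2]; exact hW l.1 l.2
  · exact iSup_le fun l => by rw [h2]; exact hV l.1 l.2

end GagliardoNirenberg

section Localization

variable {d : ℕ}

lemma eLpNorm_listSum_le {ι : Type*} {μ : Measure (EuclideanSpace ℝ (Fin d))}
    {h : ι → EuclideanSpace ℝ (Fin d) → ℝ} {B : ℝ≥0∞} {L : List ι}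
    (hc : ∀ p ∈ L, Continuous (h p)) (hB : ∀ p ∈ L, eLpNorm (h p) 2 μ ≤ B) :
    eLpNorm (fun y => (L.map fun p => h p y).sum) 2 μ ≤ L.length * B := by
  have hcont : ∀ L' ⊆ L, Continuous fun y => (L'.map fun p => h p y).sum := by
    intro L' hL'
    exact continuous_list_sum L' fun p hp => hc p (hL' hp)
  induction L with
  | nil => simp
  | cons p L ih =>
    simp only [List.map_cons, List.sum_cons, List.length_cons, Nat.cast_add, Nat.cast_one]
    refine (eLpNorm_add_le (hc p (by simp)).aestronglyMeasurable
      (hcont L (by simp)).aestronglyMeasurable (by norm_num)).trans ?_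
    rw [add_mul, one_mul, add_comm]
    gcongr
    · exact ih (fun q hq => hc q (by simp [hq])) (fun q hq => hB q (by simp [hq]))
        fun L' hL' => hcont L' fun q hq => by simp [hL' hq]
    · exact hB p (by simp)

variable (d) in
lemma exists_eLpNorm_closedBall_le : ∃ N : ℕ, ∀ h : EuclideanSpace ℝ (Fin d) → ℝ, Continuous h →
    ∀ B : ℝ≥0∞, (∀ x, eLpNorm h 2 (volume.restrict (ball x 1)) ≤ B) →
    ∀ x, eLpNorm h 2 (volume.restrict (closedBall x 2)) ≤ N * B := by
  obtain ⟨t, -, htfin, ht⟩ := finite_cover_balls_of_compact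
    (isCompact_closedBall (0 : EuclideanSpace ℝ (Fin d)) 2) one_pos
  lift t to Finset (EuclideanSpace ℝ (Fin d)) using htfin
  refine ⟨t.card, fun h hh B hB x => ?_⟩
  rw [← eLpNorm_indicator_eq_eLpNorm_restrict measurableSet_closedBall]
  calc eLpNorm ((closedBall x 2).indicator h) 2 volume
      ≤ eLpNorm (∑ y ∈ t, (ball (x + y) 1).indicator fun z => ‖h z‖) 2 volume := by
        refine eLpNorm_mono_real fun z => ?_
        rw [Finset.sum_apply]
        have hnonneg : ∀ y ∈ t, 0 ≤ (ball (x + y) 1).indicator (fun z => ‖h z‖) z :=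
          fun y _ => Set.indicator_nonneg (fun _ _ => norm_nonneg _) _
        by_cases hz : z ∈ closedBall x 2
        · have hmem : z - x ∈ closedBall (0 : EuclideanSpace ℝ (Fin d)) 2 := by
            simpa [dist_eq_norm] using hz
          obtain ⟨y, hy, hzy⟩ := Set.mem_iUnion₂.1 (ht hmem)
          have hzy' : z ∈ ball (x + y) 1 := by
            rw [mem_ball, dist_eq_norm] at hzy ⊢
            rwa [← sub_sub]
          rw [Set.indicator_of_mem hz]
          refine le_trans ?_ (Finset.single_le_sum hnonneg hy)
          rw [Set.indicator_of_mem hzy']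
        · rw [Set.indicator_of_notMem hz, norm_zero]
          exact Finset.sum_nonneg hnonneg
    _ ≤ ∑ y ∈ t, eLpNorm ((ball (x + y) 1).indicator fun z => ‖h z‖) 2 volume :=
        eLpNorm_sum_le (fun y _ => hh.norm.aestronglyMeasurable.indicator measurableSet_ball)
          (by norm_num)
    _ ≤ ∑ _y ∈ t, B := by
        refine Finset.sum_le_sum fun y _ => ?_
        rw [eLpNorm_indicator_eq_eLpNorm_restrict measurableSet_ball, eLpNorm_norm]
        exact hB _
    _ = t.card * B := by simp

/-- `χ` is a family of cutoffs, `χ x` being equal to `1` on the unit ball about `x` and supported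
in the ball of radius `2`, with derivatives of order at most `k` bounded by `M`. -/
structure IsCutoffFamily (k : ℕ) (M : ℝ)
    (χ : EuclideanSpace ℝ (Fin d) → EuclideanSpace ℝ (Fin d) → ℝ) : Prop where
  contDiff : ∀ x, ContDiff ℝ (⊤ : ℕ∞) (χ x)
  tsupport_subset : ∀ x, tsupport (χ x) ⊆ closedBall x 2
  eq_one : ∀ x, ∀ y ∈ ball x 1, χ x y = 1
  abs_le_one : ∀ x y, |χ x y| ≤ 1
  abs_wordDeriv_le : ∀ x, ∀ l : List (Fin d), l.length ≤ k → ∀ y, |wordDeriv l (χ x) y| ≤ M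

variable (d) in
lemma exists_isCutoffFamily (k : ℕ) :
    ∃ M : ℝ, ∃ χ : EuclideanSpace ℝ (Fin d) → EuclideanSpace ℝ (Fin d) → ℝ,
      IsCutoffFamily k M χ := by
  let φ : ContDiffBump (0 : EuclideanSpace ℝ (Fin d)) := ⟨1, 2, one_pos, by norm_num⟩
  have hφ : ContDiff ℝ (⊤ : ℕ∞) φ := φ.contDiff
  have hbdd : ∀ l : List (Fin d), ∃ M : ℝ, ∀ y, |wordDeriv l φ y| ≤ M := fun l =>
    (φ.hasCompactSupport.wordDeriv l).exists_bound_of_continuous (hφ.wordDeriv l).continuous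
  choose M hM using hbdd
  obtain ⟨M₀, hM₀⟩ := ((List.finite_length_le (Fin d) k).image M).bddAbove
  refine ⟨M₀, fun x y => φ (y - x), ?_, ?_, ?_, ?_, ?_⟩
  · exact fun x => hφ.comp (contDiff_id.sub contDiff_const)
  · intro x
    refine closure_minimal (fun y hy => ?_) isClosed_closedBall
    have hmem : y - x ∈ Function.support φ := hy
    rw [φ.support_eq] at hmem
    exact ball_subset_closedBall (by simpa [dist_eq_norm, φ] using hmem)
  · intro x y hy
    refine φ.one_of_mem_closedBall (ball_subset_closedBall ?_)
    simpa [dist_eq_norm, φ] using hy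
  · intro x y
    rw [abs_of_nonneg φ.nonneg]
    exact φ.le_one
  · intro x l hl y
    rw [wordDeriv_comp_sub]
    exact (hM l _).trans (hM₀ ⟨l, hl, rfl⟩)

lemma IsCutoffFamily.eLpNorm_wordDeriv_mul_le {k : ℕ} {M : ℝ}
    {χ : EuclideanSpace ℝ (Fin d) → EuclideanSpace ℝ (Fin d) → ℝ} (hχ : IsCutoffFamily k M χ)
    {u : EuclideanSpace ℝ (Fin d) → ℝ} (hu : ContDiff ℝ (⊤ : ℕ∞) u) (x : EuclideanSpace ℝ (Fin d))
    {l : List (Fin d)} (hl : l.length ≤ k) {B : ℝ≥0∞}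
    (hB : ∀ q : List (Fin d), q.length ≤ l.length →
      eLpNorm (wordDeriv q u) 2 (volume.restrict (closedBall x 2)) ≤ B) :
    eLpNorm (wordDeriv l fun y => χ x y * u y) 2 volume ≤ 2 ^ k * (ENNReal.ofReal M * B) := by
  have hsupp : Function.support (wordDeriv l fun y => χ x y * u y) ⊆ closedBall x 2 :=
    (subset_tsupport _).trans <| (tsupport_wordDeriv_subset l _).trans <|
      tsupport_mul_subset_left.trans (hχ.tsupport_subset x)
  have hexpand : (wordDeriv l fun y => χ x y * u y) = fun y =>
      ((([], l) :: leibnizSplits l).map fun p =>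
        wordDeriv p.1 (χ x) y * wordDeriv p.2 u y).sum := by
    rw [wordDeriv_mul (hχ.contDiff x) hu]
    simp
  rw [← eLpNorm_restrict_eq_of_support_subset hsupp, hexpand]
  refine (eLpNorm_listSum_le (B := ENNReal.ofReal M * B) (fun p _ =>
    ((hχ.contDiff x).wordDeriv p.1).continuous.mul (hu.wordDeriv p.2).continuous) ?_).trans ?_
  · intro p hp
    have hlen : p.1.length + p.2.length = l.length := by
      rcases List.mem_cons.1 hp with rfl | hp
      · simp
      · exact (length_of_mem_leibnizSplits hp).2
    refine (eLpNorm_le_mul_eLpNorm_of_ae_le_mul (c := M) (g := wordDeriv p.2 u)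
      (.of_forall fun y => ?_) 2).trans ?_
    · rw [norm_mul]
      gcongr
      exact hχ.abs_wordDeriv_le x p.1 (by omega) y
    · gcongr
      exact hB p.2 (by omega)
  · rw [List.length_cons, length_leibnizSplits_add_one]
    push_cast
    gcongr
    norm_num

end Localization

/-- **Lemma 2.8(iii) of the paper**: the commutator estimate
`‖D^α(fg) − f D^α g‖_{L²_ul} ≤ C (‖f‖_{C̃¹} ‖g‖_{H^{s−1}_ul} + ‖g‖_{L^∞} ‖f‖_{H^s_ul})`. -/
theorem moser_commutator (d : ℕ) (hd : 1 ≤ d) (s : ℕ) (hs : 1 ≤ s) :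
    ∃ C : ℝ, 0 < C ∧
      ∀ f g : EuclideanSpace ℝ (Fin d) → ℝ, ContDiff ℝ (⊤ : ℕ∞) f → ContDiff ℝ (⊤ : ℕ∞) g →
        ∀ α : Fin d → ℕ, (∑ i, α i) ≤ s →
          (⨆ x : EuclideanSpace ℝ (Fin d),
              eLpNorm (fun y => Dm α (fun z => f z * g z) y - f y * Dm α g y) 2
                (volume.restrict (ball x 1)))
            ≤ ENNReal.ofReal C *
              ((eLpNorm f ⊤ volume + eLpNorm (fun x => fderiv ℝ f x) ⊤ volume)
                  * ulSobolev d (s - 1) g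
                + eLpNorm g ⊤ volume * ulSobolev d s f) := by
  have : NeZero d := ⟨by omega⟩
  obtain ⟨N, hN⟩ := exists_eLpNorm_closedBall_le d
  obtain ⟨M, χ, hχ⟩ := exists_isCutoffFamily d s
  set D : ℝ≥0∞ := 2 ^ s * (ENNReal.ofReal M * N) with hD
  set K : ℝ≥0∞ := ENNReal.ofReal (((2 * s) ^ 2) ^ s ^ 2) with hK
  have htop : 2 ^ s * (K * D) ≠ ⊤ := by
    simp only [hD, hK]
    finiteness
  refine ⟨(2 ^ s * (K * D)).toReal + 1, by positivity, fun f g hf hg α hα => iSup_le fun x => ?_⟩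
  have hcut : ∀ {u : EuclideanSpace ℝ (Fin d) → ℝ} {k : ℕ} {B : ℝ≥0∞},
      ContDiff ℝ (⊤ : ℕ∞) u → k ≤ s →
      (∀ q : List (Fin d), q.length ≤ k → ∀ z,
        eLpNorm (wordDeriv q u) 2 (volume.restrict (ball z 1)) ≤ B) →
      ∀ l : List (Fin d), l.length = k →
        eLpNorm (wordDeriv l fun y => χ x y * u y) 2 volume ≤ D * B := by
    intro u k B hu hk hB l hl
    refine (hχ.eLpNorm_wordDeriv_mul_le hu x (by omega) (B := N * B) fun q hq =>
      hN _ (hu.wordDeriv q).continuous B (hB q (by omega)) x).trans_eq ?_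
    rw [hD]
    ring
  have hsup : ∀ u : EuclideanSpace ℝ (Fin d) → ℝ,
      eLpNorm (fun y => χ x y * u y) ⊤ volume ≤ eLpNorm u ⊤ volume := fun u =>
    eLpNorm_mono fun y => by
      rw [norm_mul]
      exact mul_le_of_le_one_left (norm_nonneg _) (hχ.abs_le_one x y)
  have hcompact : ∀ u : EuclideanSpace ℝ (Fin d) → ℝ, HasCompactSupport fun y => χ x y * u y :=
    fun u => HasCompactSupport.mul_right <|
      (isCompact_closedBall x 2).of_isClosed_subset (isClosed_tsupport _) (hχ.tsupport_subset x)
  have heq : ∀ (u : EuclideanSpace ℝ (Fin d) → ℝ) (l : List (Fin d)),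
      Set.EqOn (wordDeriv l u) (wordDeriv l fun y => χ x y * u y) (ball x 1) := fun u =>
    wordDeriv_eqOn isOpen_ball fun y hy => by simp [hχ.eq_one x y hy]
  have hterm : ∀ p ∈ leibnizSplits (multiWord α),
      eLpNorm (fun y => wordDeriv p.1 f y * wordDeriv p.2 g y) 2 (volume.restrict (ball x 1)) ≤
        K * (eLpNorm (fun x => fderiv ℝ f x) ⊤ volume * (D * ulSobolev d (s - 1) g) +
          D * ulSobolev d s f * eLpNorm g ⊤ volume) := by
    intro p hp
    obtain ⟨hne, hlen⟩ := length_of_mem_leibnizSplits hp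
    rw [length_multiWord] at hlen
    obtain ⟨p', i, hp'⟩ := (List.eq_nil_or_concat p.1).resolve_left hne
    rw [List.concat_eq_append] at hp'
    rw [hp', List.length_append, List.length_singleton] at hlen
    have hF := hf.pd i
    have hFtop : eLpNorm (pd i f) ⊤ volume ≤ eLpNorm (fun x => fderiv ℝ f x) ⊤ volume :=
      eLpNorm_mono fun y => ((fderiv ℝ f y).le_opNorm _).trans_eq (by simp)
    calc eLpNorm (fun y => wordDeriv p.1 f y * wordDeriv p.2 g y) 2 (volume.restrict (ball x 1))
        = eLpNorm (fun y => wordDeriv p' (fun y => χ x y * pd i f y) y *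
            wordDeriv p.2 (fun y => χ x y * g y) y) 2 (volume.restrict (ball x 1)) := by
          refine eLpNorm_congr_ae ?_
          filter_upwards [ae_restrict_mem measurableSet_ball] with y hy
          rw [hp', wordDeriv_append, ← heq _ _ hy, ← heq _ _ hy]
          rfl
      _ ≤ eLpNorm (fun y => wordDeriv p' (fun y => χ x y * pd i f y) y *
            wordDeriv p.2 (fun y => χ x y * g y) y) 2 volume :=
          eLpNorm_mono_measure _ Measure.restrict_le_self
      _ ≤ _ := eLpNorm_wordDeriv_mul_wordDeriv_le ((hχ.contDiff x).mul hF) (hcompact _)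
          ((hχ.contDiff x).mul hg) (hcompact _) rfl
          (hcut hF (by omega) (B := ulSobolev d s f) fun q hq z => by
            simpa [wordDeriv_append] using
              eLpNorm_wordDeriv_le_ulSobolev hf (l := q ++ [i]) (m := s) (by simp; omega) z)
          (hcut hg (by omega) (B := ulSobolev d (s - 1) g) fun q hq z =>
            eLpNorm_wordDeriv_le_ulSobolev hg (by omega) z)
      _ ≤ _ := by
          have hks : p'.length + p.2.length ≤ s := by omega
          have hs' : (1 : ℝ) ≤ s := by exact_mod_cast hs
          gcongr ?_ * (?_ * _ + _ * ?_)
          · refine ENNReal.ofReal_le_ofReal ?_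
            calc ((2 * ((p'.length + p.2.length : ℕ) : ℝ)) ^ 2) ^ (p'.length + p.2.length) ^ 2
                ≤ ((2 * (s : ℝ)) ^ 2) ^ (p'.length + p.2.length) ^ 2 := by gcongr
              _ ≤ ((2 * (s : ℝ)) ^ 2) ^ s ^ 2 :=
                pow_le_pow_right₀ (by nlinarith) (by gcongr)
          · exact (hsup _).trans hFtop
          · exact hsup g
  have hexpand : (fun y => Dm α (fun z => f z * g z) y - f y * Dm α g y) = fun y =>
      ((leibnizSplits (multiWord α)).map fun p => wordDeriv p.1 f y * wordDeriv p.2 g y).sum := by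
    simp only [Dm_eq_wordDeriv]
    rw [wordDeriv_mul hf hg]
    simp
  have hlength : ((leibnizSplits (multiWord α)).length : ℝ≥0∞) ≤ 2 ^ s := by
    have h := length_leibnizSplits_add_one (multiWord α)
    rw [length_multiWord] at h
    have h' : 2 ^ (∑ i, α i) ≤ 2 ^ s := Nat.pow_le_pow_right (by norm_num) hα
    exact_mod_cast (by omega : (leibnizSplits (multiWord α)).length ≤ 2 ^ s)
  rw [hexpand]
  refine (eLpNorm_listSum_le (fun p _ => (hf.wordDeriv p.1).continuous.mul
    (hg.wordDeriv p.2).continuous) hterm).trans ?_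
  calc _ ≤ 2 ^ s * (K * (eLpNorm (fun x => fderiv ℝ f x) ⊤ volume * (D * ulSobolev d (s - 1) g) +
          D * ulSobolev d s f * eLpNorm g ⊤ volume)) := by gcongr
    _ = 2 ^ s * (K * D) * (eLpNorm (fun x => fderiv ℝ f x) ⊤ volume * ulSobolev d (s - 1) g +
          eLpNorm g ⊤ volume * ulSobolev d s f) := by ring
    _ ≤ _ := by
      gcongr
      · rw [← ENNReal.ofReal_toReal htop]
        exact ENNReal.ofReal_le_ofReal (by simp)
      · exact le_add_self
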